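/- arXiv:1507.05929 — 2 statements merged into one kernel-verified Lean document; each statement's English description precedes it below -/
import Mathlib

section
/- Fix r ∈ (0,1), λ ∈ (2r-1, 1) with λ > 0, and η > 0. For each m define ε_m := ε_m(λ,η,r), and set η⁻_m := √m·(μ_m(λ) - μ_m(λ - ε_m))/σ_m(λ - ε_m) and η⁺_m := -√m·(μ_m(λ) - μ_m(λ + ε_m))/σ_m(λ + ε_m). Then η⁻_m ~ η and η⁺_m ~ η as m → ∞; in particular η⁻_m → η and η⁺_m → η. -/
open MeasureTheory ProbabilityTheory Filter Topology

noncomputable section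

/-- Centered bivariate Gaussian pair `(w, v)` in which `w` and `v` are each standard
normal and `E[w v] = lam`, realized as the law of `(z₁, lam·z₁ + √(1-lam²)·z₂)`
for independent standard normals `z₁, z₂`. -/
def gaussPair (lam : ℝ) : Measure (ℝ × ℝ) :=
  Measure.map (fun z : ℝ × ℝ => (z.1, lam * z.1 + Real.sqrt (1 - lam ^ 2) * z.2))
    ((gaussianReal 0 1).prod (gaussianReal 0 1))

/-- `μ(λ,h) = P(w ≥ h ∧ v ≥ h)`. -/
def mu (lam h : ℝ) : ℝ := (gaussPair lam {p : ℝ × ℝ | h ≤ p.1 ∧ h ≤ p.2}).toReal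

/-- `σ(λ,h) = sqrt(μ(λ,h)(1-μ(λ,h)))`. -/
def sigma' (lam h : ℝ) : ℝ := Real.sqrt (mu lam h * (1 - mu lam h))

/-- The threshold `h_m = sqrt(2 r log m)`. -/
def hthr (r : ℝ) (m : ℕ) : ℝ := Real.sqrt (2 * r * Real.log m)

/-- `μ_m(λ) = μ(λ, h_m)`. -/
def muM (r : ℝ) (m : ℕ) (lam : ℝ) : ℝ := mu lam (hthr r m)

/-- `σ_m(λ) = σ(λ, h_m)`. -/
def sigM (r : ℝ) (m : ℕ) (lam : ℝ) : ℝ := sigma' lam (hthr r m)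

/-- Canonical probability space carrying `m` i.i.d. random vectors in `ℝ^d`
whose coordinates are i.i.d. standard normal: `a_i ω := ω i`. -/
def Prob (d m : ℕ) : Measure (Fin m → Fin d → ℝ) :=
  Measure.pi fun _ => Measure.pi fun _ : Fin d => gaussianReal 0 1

/-- Euclidean inner product on `ℝ^d`. -/
def dotp {d : ℕ} (a x : Fin d → ℝ) : ℝ := ∑ j, a j * x j

/-- `x` lies on the unit sphere `S^{d-1}`. -/
def unitVec {d : ℕ} (x : Fin d → ℝ) : Prop := ∑ j, x j ^ 2 = 1

/-- The score `S_m(x,y) = (1/m) ∑_i 1[⟨a_i,x⟩ ≥ h_m]·1[⟨a_i,y⟩ ≥ h_m]`. -/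
def score (d m : ℕ) (r : ℝ) (x y : Fin d → ℝ) (ω : Fin m → Fin d → ℝ) : ℝ :=
  (1 / (m : ℝ)) * ∑ i, (if hthr r m ≤ dotp (ω i) x then (1 : ℝ) else 0) *
    (if hthr r m ≤ dotp (ω i) y then (1 : ℝ) else 0)

/-- The standard normal cumulative distribution function `Φ`. -/
def Phi (t : ℝ) : ℝ := (gaussianReal 0 1 (Set.Iic t)).toReal

/-- The standard normal upper tail `P(N(0,1) ≥ t)`. -/
def gaussTail (t : ℝ) : ℝ := (gaussianReal 0 1 {z : ℝ | t ≤ z}).toReal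

/-- `ε_m(λ,η,r) = C(λ,r,m,η)·m^{-(λ-(2r-1))/(2(1+λ))}` with
`C = √(2π)·(1+λ)·(1-λ²)^{1/4}·η/√(2r log m)`. -/
def epsm (r lam eta : ℝ) (m : ℕ) : ℝ :=
  (Real.sqrt (2 * Real.pi) * (1 + lam) * (1 - lam ^ 2) ^ ((1 : ℝ) / 4) * eta /
    Real.sqrt (2 * r * Real.log m)) * (m : ℝ) ^ (-(lam - (2 * r - 1)) / (2 * (1 + lam)))

/-- Gaussian tail as a real-valued function. -/
def Qt (t : ℝ) : ℝ := (gaussianReal 0 1).real (Set.Ici t)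

lemma Qt_eq (t : ℝ) : Qt t = Qt 0 - ∫ x in (0:ℝ)..t, gaussianPDFReal 0 1 x := by
  have key : ∀ t, Qt t = ∫ x in Set.Ioi t, gaussianPDFReal 0 1 x := by
    intro t
    rw [Qt, Measure.real, gaussianReal_apply_eq_integral 0 one_ne_zero,
      ENNReal.toReal_ofReal (integral_nonneg fun x => gaussianPDFReal_nonneg _ _ _),
      integral_Ici_eq_integral_Ioi]
  rw [key, key, ← intervalIntegral.integral_Ioi_sub_Ioi'
    (integrable_gaussianPDFReal 0 1).integrableOn (integrable_gaussianPDFReal 0 1).integrableOn]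
  ring

lemma continuous_pdf : Continuous (gaussianPDFReal 0 1) := by
  unfold gaussianPDFReal
  fun_prop

lemma hasDerivAt_Qt (t : ℝ) : HasDerivAt Qt (-gaussianPDFReal 0 1 t) t := by
  have h1 : Qt = fun t => Qt 0 - ∫ x in (0:ℝ)..t, gaussianPDFReal 0 1 x := funext Qt_eq
  rw [h1]
  have h2 := (continuous_pdf.integral_hasStrictDerivAt 0 t).hasDerivAt
  exact h2.const_sub (Qt 0)

lemma continuous_Qt : Continuous Qt :=
  continuous_iff_continuousAt.2 fun t => (hasDerivAt_Qt t).continuousAt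

lemma Qt_nonneg (t : ℝ) : 0 ≤ Qt t := measureReal_nonneg
lemma Qt_le_one (t : ℝ) : Qt t ≤ 1 := measureReal_le_one

lemma Qt_le (h : ℝ) (hh : 0 ≤ h) : Qt h ≤ Real.exp (-h ^ 2 / 2) := by
  have := measure_ge_le_exp_mul_mgf (μ := gaussianReal 0 1) (X := id) (t := h) h hh
    (integrable_exp_mul_gaussianReal h)
  rw [mgf_id_gaussianReal, ← Real.exp_add] at this
  refine le_trans (le_of_eq ?_) (this.trans (le_of_eq ?_))
  · rfl
  · congr 1
    simp
    ring

lemma mu_eq (s h : ℝ) (hs : s ∈ Set.Ioo (-1:ℝ) 1) :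
    mu s h = ∫ x in Set.Ici h, Qt ((h - s * x) / Real.sqrt (1 - s ^ 2)) ∂(gaussianReal 0 1) := by
  have hw : 0 < Real.sqrt (1 - s ^ 2) := Real.sqrt_pos.2 (by nlinarith [hs.1, hs.2])
  have hms : MeasurableSet {p : ℝ × ℝ | h ≤ p.1 ∧ h ≤ p.2} :=
    (measurableSet_le measurable_const measurable_fst).inter
      (measurableSet_le measurable_const measurable_snd)
  have hmf : Measurable (fun z : ℝ × ℝ => (z.1, s * z.1 + Real.sqrt (1 - s ^ 2) * z.2)) := by
    fun_prop
  rw [mu, gaussPair, Measure.map_apply hmf hms, Measure.prod_apply (hmf hms),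
    ← integral_indicator measurableSet_Ici, ← integral_toReal]
  · congr 1
    ext x
    by_cases hx : h ≤ x
    · rw [Set.indicator_of_mem (Set.mem_Ici.2 hx), Qt, Measure.real]
      congr 2
      ext y
      simp only [Set.mem_preimage, Set.mem_ofPred_eq, hx, true_and, Set.mem_Ici]
      rw [div_le_iff₀ hw]
      constructor <;> intro h <;> linarith
    · rw [Set.indicator_of_notMem (by simpa using hx)]
      have : (Prod.mk x ⁻¹' ((fun z : ℝ × ℝ => (z.1, s * z.1 + Real.sqrt (1 - s ^ 2) * z.2)) ⁻¹'
          {p : ℝ × ℝ | h ≤ p.1 ∧ h ≤ p.2})) = ∅ := by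
        ext y
        simp [hx]
      rw [this]
      simp
  · exact (measurable_measure_prodMk_left (hmf hms)).aemeasurable
  · exact ae_of_all _ fun x => measure_lt_top _ _

lemma mu_zero_le (h : ℝ) (hh : 0 ≤ h) : mu 0 h ≤ Real.exp (-h ^ 2) := by
  rw [mu_eq 0 h (by norm_num)]
  simp only [zero_mul, sub_zero, ne_eq, OfNat.ofNat_ne_zero, not_false_eq_true, zero_pow,
    Real.sqrt_one, div_one, integral_const, smul_eq_mul]
  have h1 : ((gaussianReal 0 1).restrict (Set.Ici h)).real Set.univ = Qt h := by
    simp [Measure.real, Qt]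
  rw [h1]
  calc Qt h * Qt h ≤ Real.exp (-h ^ 2 / 2) * Real.exp (-h ^ 2 / 2) :=
        mul_le_mul (Qt_le h hh) (Qt_le h hh) (Qt_nonneg _) (Real.exp_pos _).le
    _ = _ := by rw [← Real.exp_add]; congr 1; ring

lemma mu_nonneg (s h : ℝ) : 0 ≤ mu s h := ENNReal.toReal_nonneg

/-- Bivariate density on the diagonal. -/
def Dd (s h : ℝ) : ℝ := 1 / (2 * Real.pi * Real.sqrt (1 - s ^ 2)) * Real.exp (-h ^ 2 / (1 + s))

lemma hasDerivAt_arg (s h x : ℝ) (hs : s ∈ Set.Ioo (-1:ℝ) 1) :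
    HasDerivAt (fun s => (h - s * x) / Real.sqrt (1 - s ^ 2))
      ((s * h - x) / Real.sqrt (1 - s ^ 2) ^ 3) s := by
  have h0 : 0 < 1 - s ^ 2 := by nlinarith [hs.1, hs.2]
  have hw : 0 < Real.sqrt (1 - s ^ 2) := Real.sqrt_pos.2 h0
  have h1 : HasDerivAt (fun s : ℝ => 1 - s ^ 2) (-(2 * s)) s := by
    simpa using (hasDerivAt_pow 2 s).const_sub 1
  have h2 := h1.sqrt h0.ne'
  have h3 : HasDerivAt (fun s : ℝ => h - s * x) (-x) s := by
    simpa using ((hasDerivAt_id s).mul_const x).const_sub h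
  refine (h3.div h2 hw.ne').congr_deriv ?_
  have hsq : Real.sqrt (1 - s ^ 2) ^ 2 = 1 - s ^ 2 := Real.sq_sqrt h0.le
  set w := Real.sqrt (1 - s ^ 2)
  field_simp
  rw [hsq]
  ring

lemma pdf_le_one (t : ℝ) : gaussianPDFReal 0 1 t ≤ 1 := by
  unfold gaussianPDFReal
  have h1 : Real.exp (-(t - 0) ^ 2 / (2 * ((1 : NNReal) : ℝ))) ≤ 1 := by
    rw [Real.exp_le_one_iff]
    have := sq_nonneg t
    simp only [sub_zero, NNReal.coe_one]
    linarith
  have h2 : (Real.sqrt (2 * Real.pi * ((1 : NNReal) : ℝ)))⁻¹ ≤ 1 := by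
    apply inv_le_one_of_one_le₀
    rw [Real.one_le_sqrt]
    simp
    linarith [Real.pi_gt_three]
  calc _ ≤ (1:ℝ) * 1 := mul_le_mul h2 h1 (Real.exp_pos _).le zero_le_one
    _ = 1 := one_mul 1

lemma integral_deriv (s h : ℝ) (hs : s ∈ Set.Ioo (-1:ℝ) 1) (hh : 0 < h) :
    ∫ x in Set.Ici h, -gaussianPDFReal 0 1 ((h - s * x) / Real.sqrt (1 - s ^ 2)) *
      ((s * h - x) / Real.sqrt (1 - s ^ 2) ^ 3) ∂(gaussianReal 0 1) = Dd s h := by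
  have h0 : 0 < 1 - s ^ 2 := by nlinarith [hs.1, hs.2]
  have hw : 0 < Real.sqrt (1 - s ^ 2) := Real.sqrt_pos.2 h0
  have hsq : Real.sqrt (1 - s ^ 2) ^ 2 = 1 - s ^ 2 := Real.sq_sqrt h0.le
  rw [gaussianReal_of_var_ne_zero 0 one_ne_zero,
    setIntegral_withDensity_eq_setIntegral_toReal_smul (measurable_gaussianPDF 0 1)
      (ae_of_all _ fun _ => gaussianPDF_lt_top) _ measurableSet_Ici,
    integral_Ici_eq_integral_Ioi]
  set w := Real.sqrt (1 - s ^ 2) with hwdef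
  let G : ℝ → ℝ := fun x => -(1 / (2 * Real.pi * w)) *
    Real.exp (-((x - s * h) ^ 2 + w ^ 2 * h ^ 2) / (2 * w ^ 2))
  have hG : ∀ x, HasDerivAt G ((1 / (2 * Real.pi * w)) *
      Real.exp (-((x - s * h) ^ 2 + w ^ 2 * h ^ 2) / (2 * w ^ 2)) * ((x - s * h) / w ^ 2)) x := by
    intro x
    have h1 : HasDerivAt (fun x : ℝ => -((x - s * h) ^ 2 + w ^ 2 * h ^ 2) / (2 * w ^ 2))
        (-(2 * (x - s * h)) / (2 * w ^ 2)) x := by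
      have := ((((hasDerivAt_id x).sub_const (s * h)).pow 2).add_const (w ^ 2 * h ^ 2)).neg.div_const
        (2 * w ^ 2)
      simpa using this
    refine (h1.exp.const_mul (-(1 / (2 * Real.pi * w)))).congr_deriv ?_
    field_simp
  have hlim : Tendsto G atTop (𝓝 0) := by
    have h1 : Tendsto (fun x : ℝ => -((x - s * h) ^ 2 + w ^ 2 * h ^ 2) / (2 * w ^ 2)) atTop atBot := by
      apply Tendsto.atBot_div_const (by positivity)
      apply tendsto_neg_atTop_atBot.comp
      apply tendsto_atTop_add_const_right
      exact (tendsto_pow_atTop two_ne_zero).comp (tendsto_atTop_add_const_right _ (-(s * h)) tendsto_id)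
    have := (Real.tendsto_exp_atBot.comp h1).const_mul (-(1 / (2 * Real.pi * w)))
    simpa [G] using this
  have hI := integral_Ioi_of_hasDerivAt_of_nonneg' (a := h) (fun x _ => hG x) (fun x hx => ?_) hlim
  · refine Eq.trans ?_ (hI.trans ?_)
    · congr 1
      ext x
      rw [toReal_gaussianPDF, smul_eq_mul]
      unfold gaussianPDFReal
      have e1 : Real.exp (-((x - s * h) ^ 2 + w ^ 2 * h ^ 2) / (2 * w ^ 2)) =
          Real.exp (-(x - 0) ^ 2 / (2 * ((1 : NNReal) : ℝ))) *
          Real.exp (-((h - s * x) / w - 0) ^ 2 / (2 * ((1 : NNReal) : ℝ))) := by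
        rw [← Real.exp_add]
        congr 1
        simp only [NNReal.coe_one]
        field_simp
        rw [hsq]
        ring
      have e2 : (Real.sqrt (2 * Real.pi * ((1 : NNReal) : ℝ)))⁻¹ *
          (Real.sqrt (2 * Real.pi * ((1 : NNReal) : ℝ)))⁻¹ = 1 / (2 * Real.pi) := by
        rw [← mul_inv, Real.mul_self_sqrt (by positivity)]
        simp
      rw [e1]
      have e3 : 1 / (2 * Real.pi * w) = 1 / (2 * Real.pi) / w := by field_simp
      rw [e3, ← e2]
      field_simp
      ring
    · simp only [G, Dd]
      rw [zero_sub, neg_mul, neg_neg]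
      congr 2
      have : 1 + s ≠ 0 := by linarith [hs.1]
      rw [hsq]
      field_simp
      ring
  · have hx : h < x := hx
    have : 0 ≤ x - s * h := by nlinarith [hs.2]
    positivity

lemma hasDerivAt_mu (s h : ℝ) (hs : s ∈ Set.Ioo (-1:ℝ) 1) (hh : 0 < h) :
    HasDerivAt (fun s => mu s h) (Dd s h) s := by
  obtain ⟨a, ha1, ha2⟩ : ∃ a, |s| < a ∧ a < 1 := exists_between (abs_lt.2 hs)
  have ha0 : 0 ≤ a := (abs_nonneg s).trans ha1.le
  have hnhds : Set.Ioo (-a) a ∈ 𝓝 s := Ioo_mem_nhds (abs_lt.1 ha1).1 (abs_lt.1 ha1).2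
  have hsub : ∀ t ∈ Set.Ioo (-a) a, t ∈ Set.Ioo (-1:ℝ) 1 := fun t ht =>
    ⟨by linarith [ht.1], by linarith [ht.2]⟩
  have ha3 : 0 < 1 - a ^ 2 := by nlinarith
  have hmain := hasDerivAt_integral_of_dominated_loc_of_deriv_le
    (μ := (gaussianReal 0 1).restrict (Set.Ici h)) (x₀ := s)
    (F := fun s x => Qt ((h - s * x) / Real.sqrt (1 - s ^ 2)))
    (F' := fun s x => -gaussianPDFReal 0 1 ((h - s * x) / Real.sqrt (1 - s ^ 2)) *
      ((s * h - x) / Real.sqrt (1 - s ^ 2) ^ 3))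
    (bound := fun x => (h + |x|) / Real.sqrt (1 - a ^ 2) ^ 3) hnhds ?_ ?_ ?_ ?_ ?_ ?_
  · have h2 := hmain.2
    rw [integral_deriv s h hs hh] at h2
    refine h2.congr_of_eventuallyEq ?_
    filter_upwards [hnhds] with t ht
    exact mu_eq t h (hsub t ht)
  · refine Eventually.of_forall fun t => Continuous.aestronglyMeasurable ?_
    exact continuous_Qt.comp (by fun_prop)
  · refine Integrable.of_bound (C := 1) (Continuous.aestronglyMeasurable ?_) ?_
    · exact continuous_Qt.comp (by fun_prop)
    · refine ae_of_all _ fun x => ?_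
      rw [Real.norm_eq_abs, abs_of_nonneg (Qt_nonneg _)]
      exact Qt_le_one _
  · refine Continuous.aestronglyMeasurable ?_
    exact ((continuous_pdf.comp (by fun_prop)).neg).mul (by fun_prop)
  · refine ae_of_all _ fun x t ht => ?_
    have hw1 : 0 < Real.sqrt (1 - a ^ 2) := Real.sqrt_pos.2 ha3
    have hw2 : Real.sqrt (1 - a ^ 2) ≤ Real.sqrt (1 - t ^ 2) := by
      apply Real.sqrt_le_sqrt
      nlinarith [ht.1, ht.2]
    rw [norm_mul, norm_neg, norm_div, Real.norm_eq_abs, Real.norm_eq_abs, Real.norm_eq_abs,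
      abs_of_nonneg (gaussianPDFReal_nonneg _ _ _), abs_of_nonneg (a := Real.sqrt (1 - t ^ 2) ^ 3)
      (by positivity)]
    have h1 : |t * h - x| ≤ h + |x| := by
      refine (abs_sub _ _).trans ?_
      rw [abs_mul, abs_of_pos hh]
      have : |t| ≤ 1 := (abs_lt.2 (hsub t ht)).le
      nlinarith
    calc _ ≤ 1 * ((h + |x|) / Real.sqrt (1 - a ^ 2) ^ 3) := by
          apply mul_le_mul (pdf_le_one _) _ (by positivity) zero_le_one
          gcongr
      _ = _ := one_mul _
  · apply Integrable.div_const
    apply Integrable.add (integrable_const _)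
    have := (memLp_id_gaussianReal (μ := 0) (v := 1) 1).integrable (by norm_num)
    exact this.abs.restrict
  · refine ae_of_all _ fun x t ht => ?_
    exact (hasDerivAt_Qt _).comp t (hasDerivAt_arg t h x (hsub t ht))

/-- Leading constant of the tail asymptotics. -/
def ff (s : ℝ) : ℝ := (1 + s) ^ 2 / (2 * Real.pi * Real.sqrt (1 - s ^ 2))

/-- Exponential factor. -/
def Ee (s h : ℝ) : ℝ := Real.exp (-h ^ 2 / (1 + s))

lemma ff_mono {a b : ℝ} (ha : 0 ≤ a) (hab : a ≤ b) (hb : b < 1) : ff a ≤ ff b := by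
  unfold ff
  have : 0 < Real.sqrt (1 - b ^ 2) := Real.sqrt_pos.2 (by nlinarith)
  have h1 : Real.sqrt (1 - b ^ 2) ≤ Real.sqrt (1 - a ^ 2) := Real.sqrt_le_sqrt (by nlinarith)
  have := Real.pi_pos
  gcongr

lemma Dd_eq (s h : ℝ) (hs : 0 ≤ s) : Dd s h = ff s / (1 + s) ^ 2 * Ee s h := by
  have : 1 + s ≠ 0 := by linarith
  unfold Dd ff Ee
  field_simp

lemma hasDerivAt_Ee (s h : ℝ) (hs : 0 ≤ s) :
    HasDerivAt (fun s => Ee s h) (h ^ 2 / (1 + s) ^ 2 * Ee s h) s := by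
  have hne : 1 + s ≠ 0 := by linarith
  have h1 : HasDerivAt (fun s : ℝ => -h ^ 2 / (1 + s)) (h ^ 2 / (1 + s) ^ 2) s := by
    have := (hasDerivAt_const s (-h ^ 2)).div ((hasDerivAt_id s).const_add 1) hne
    refine this.congr_deriv ?_
    simp
  refine h1.exp.congr_deriv ?_
  unfold Ee
  ring

lemma mu_sub_le {a b h : ℝ} (ha : 0 ≤ a) (hab : a ≤ b) (hb : b < 1) (hh : 0 < h) :
    mu b h - mu a h ≤ ff b / h ^ 2 * (Ee b h - Ee a h) := by
  have hd : ∀ s ∈ Set.Icc a b, HasDerivAt (fun s => ff b / h ^ 2 * Ee s h - mu s h)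
      (ff b / h ^ 2 * (h ^ 2 / (1 + s) ^ 2 * Ee s h) - Dd s h) s := fun s hs =>
    ((hasDerivAt_Ee s h (ha.trans hs.1)).const_mul _).sub
      (hasDerivAt_mu s h ⟨by linarith [hs.1], by linarith [hs.2]⟩ hh)
  have hm : MonotoneOn (fun s => ff b / h ^ 2 * Ee s h - mu s h) (Set.Icc a b) := by
    refine monotoneOn_of_deriv_nonneg (convex_Icc a b)
      (fun s hs => (hd s hs).continuousAt.continuousWithinAt)
      (fun s hs => (hd s (interior_subset hs)).differentiableAt.differentiableWithinAt) ?_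
    intro s hs
    have hs' := interior_subset hs
    rw [(hd s hs').deriv, Dd_eq s h (ha.trans hs'.1)]
    have h1 := ff_mono (ha.trans hs'.1) hs'.2 hb
    have h2 : 0 < 1 + s := by linarith [hs'.1]
    have h3 : 0 ≤ Ee s h := (Real.exp_pos _).le
    have : ff b / h ^ 2 * (h ^ 2 / (1 + s) ^ 2 * Ee s h) - ff s / (1 + s) ^ 2 * Ee s h =
      (ff b - ff s) / (1 + s) ^ 2 * Ee s h := by field_simp
    rw [this]
    have := sub_nonneg.2 h1
    positivity
  have := hm (Set.left_mem_Icc.2 hab) (Set.right_mem_Icc.2 hab) hab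
  simp only at this
  linarith

lemma le_mu_sub {a b h : ℝ} (ha : 0 ≤ a) (hab : a ≤ b) (hb : b < 1) (hh : 0 < h) :
    ff a / h ^ 2 * (Ee b h - Ee a h) ≤ mu b h - mu a h := by
  have hd : ∀ s ∈ Set.Icc a b, HasDerivAt (fun s => mu s h - ff a / h ^ 2 * Ee s h)
      (Dd s h - ff a / h ^ 2 * (h ^ 2 / (1 + s) ^ 2 * Ee s h)) s := fun s hs =>
    (hasDerivAt_mu s h ⟨by linarith [hs.1], by linarith [hs.2]⟩ hh).sub
    ((hasDerivAt_Ee s h (ha.trans hs.1)).const_mul _)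
  have hm : MonotoneOn (fun s => mu s h - ff a / h ^ 2 * Ee s h) (Set.Icc a b) := by
    refine monotoneOn_of_deriv_nonneg (convex_Icc a b)
      (fun s hs => (hd s hs).continuousAt.continuousWithinAt)
      (fun s hs => (hd s (interior_subset hs)).differentiableAt.differentiableWithinAt) ?_
    intro s hs
    have hs' := interior_subset hs
    rw [(hd s hs').deriv, Dd_eq s h (ha.trans hs'.1)]
    have h1 := ff_mono ha hs'.1 (lt_of_le_of_lt hs'.2 hb)
    have h2 : 0 < 1 + s := by linarith [hs'.1]
    have h3 : 0 ≤ Ee s h := (Real.exp_pos _).le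
    have : ff s / (1 + s) ^ 2 * Ee s h - ff a / h ^ 2 * (h ^ 2 / (1 + s) ^ 2 * Ee s h) =
      (ff s - ff a) / (1 + s) ^ 2 * Ee s h := by field_simp
    rw [this]
    have := sub_nonneg.2 h1
    positivity
  have := hm (Set.left_mem_Icc.2 hab) (Set.right_mem_Icc.2 hab) hab
  simp only at this
  linarith

lemma tendsto_sq : Tendsto (fun h : ℝ => h ^ 2) atTop atTop := tendsto_pow_atTop two_ne_zero

lemma Ee_div (a b h : ℝ) :
    Ee a h / Ee b h = Real.exp (-(1 / (1 + a) - 1 / (1 + b)) * h ^ 2) := by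
  unfold Ee
  rw [← Real.exp_sub]
  congr 1
  ring

lemma tendsto_mu (lam : ℝ) (h0 : 0 < lam) (h1 : lam < 1) :
    Tendsto (fun h => h ^ 2 * mu lam h / Ee lam h) atTop (𝓝 (ff lam)) := by
  have hE : ∀ h, 0 < Ee lam h := fun h => Real.exp_pos _
  rw [tendsto_order]
  constructor
  · intro l hl
    have hc : ContinuousAt ff lam := by
      unfold ff
      have : 0 < Real.sqrt (1 - lam ^ 2) := Real.sqrt_pos.2 (by nlinarith)
      have := Real.pi_pos
      fun_prop (disch := positivity)
    have hev : ∀ᶠ a in 𝓝[<] lam, l < ff a :=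
      (hc.eventually (lt_mem_nhds hl)).filter_mono nhdsWithin_le_nhds
    obtain ⟨a, hal, ha0, halam⟩ := (hev.and (Ioo_mem_nhdsLT h0)).exists
    have hpos : 0 < 1 / (1 + a) - 1 / (1 + lam) := by
      rw [sub_pos]
      exact one_div_lt_one_div_of_lt (by linarith) (by linarith)
    have hlim : Tendsto (fun h => ff a * (1 - Ee a h / Ee lam h)) atTop (𝓝 (ff a * (1 - 0))) := by
      refine Tendsto.const_mul _ (Tendsto.const_sub _ ?_)
      simp_rw [Ee_div]
      refine Real.tendsto_exp_atBot.comp ?_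
      exact tendsto_sq.const_mul_atTop_of_neg (by linarith)
    rw [sub_zero, mul_one] at hlim
    filter_upwards [hlim.eventually (lt_mem_nhds hal), eventually_gt_atTop 0] with h hl hh
    refine hl.trans_le ?_
    have := le_mu_sub ha0.le halam.le h1 hh
    have h2 := mu_nonneg a h
    rw [le_div_iff₀ (hE h)]
    have h3 : ff a / h ^ 2 * (Ee lam h - Ee a h) ≤ mu lam h := by linarith
    calc ff a * (1 - Ee a h / Ee lam h) * Ee lam h
        = h ^ 2 * (ff a / h ^ 2 * (Ee lam h - Ee a h)) := by
          have := (hE h).ne'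
          field_simp
      _ ≤ _ := by gcongr
  · intro u hu
    have hpos : 0 < 1 / (1 + 0) - 1 / (1 + lam) := by
      rw [sub_pos]
      exact one_div_lt_one_div_of_lt (by linarith) (by linarith)
    have hlim : Tendsto (fun h => ff lam + h ^ 2 * (Ee 0 h / Ee lam h)) atTop
        (𝓝 (ff lam + 0)) := by
      refine Tendsto.const_add _ ?_
      simp_rw [Ee_div]
      have h2 := (Real.tendsto_pow_mul_exp_neg_atTop_nhds_zero 1).comp
        (tendsto_sq.const_mul_atTop hpos)
      have h3 := h2.const_mul (1 / (1 + 0) - 1 / (1 + lam))⁻¹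
      rw [mul_zero] at h3
      refine h3.congr fun h => ?_
      simp only [Function.comp_apply, pow_one]
      rw [← mul_assoc, ← mul_assoc, inv_mul_cancel₀ hpos.ne', one_mul, neg_mul]
    rw [add_zero] at hlim
    filter_upwards [hlim.eventually (gt_mem_nhds hu), eventually_gt_atTop 0] with h hl hh
    refine lt_of_le_of_lt ?_ hl
    have h2 := mu_sub_le le_rfl h0.le h1 hh
    have h3 : mu 0 h ≤ Ee 0 h := by
      have := mu_zero_le h hh.le
      simpa [Ee] using this
    have h4 : 0 ≤ ff lam / h ^ 2 * Ee 0 h := by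
      have := hE h
      have := Real.exp_pos (-h ^ 2 / (1 + 0))
      unfold ff Ee
      positivity
    rw [div_le_iff₀ (hE h)]
    calc h ^ 2 * mu lam h ≤ h ^ 2 * (ff lam / h ^ 2 * Ee lam h + Ee 0 h) := by
          gcongr
          linarith
      _ = _ := by
          have := (hE h).ne'
          field_simp

lemma mvt_mu {a b h : ℝ} (ha : a ∈ Set.Ioo (-1:ℝ) 1) (hb : b ∈ Set.Ioo (-1:ℝ) 1) (hh : 0 < h) :
    ∃ x, x ∈ Set.Ioo (-1:ℝ) 1 ∧ |x - a| ≤ |b - a| ∧ mu b h - mu a h = (b - a) * Dd x h := by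
  rcases lt_trichotomy a b with hab | hab | hab
  · have hs : ∀ x ∈ Set.Icc a b, x ∈ Set.Ioo (-1:ℝ) 1 := fun x hx =>
      ⟨ha.1.trans_le hx.1, hx.2.trans_lt hb.2⟩
    obtain ⟨c, hc, he⟩ := exists_hasDerivAt_eq_slope (fun s => mu s h) (fun s => Dd s h) hab
      (fun x hx => (hasDerivAt_mu x h (hs x hx) hh).continuousAt.continuousWithinAt)
      (fun x hx => hasDerivAt_mu x h (hs x (Set.Ioo_subset_Icc_self hx)) hh)
    refine ⟨c, hs c (Set.Ioo_subset_Icc_self hc), ?_, ?_⟩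
    · rw [abs_of_pos (by linarith [hc.1]), abs_of_pos (by linarith)]
      linarith [hc.2]
    · have : b - a ≠ 0 := by linarith
      rw [he]
      field_simp
  · subst hab
    exact ⟨a, ha, by simp, by simp⟩
  · have hs : ∀ x ∈ Set.Icc b a, x ∈ Set.Ioo (-1:ℝ) 1 := fun x hx =>
      ⟨hb.1.trans_le hx.1, hx.2.trans_lt ha.2⟩
    obtain ⟨c, hc, he⟩ := exists_hasDerivAt_eq_slope (fun s => mu s h) (fun s => Dd s h) hab
      (fun x hx => (hasDerivAt_mu x h (hs x hx) hh).continuousAt.continuousWithinAt)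
      (fun x hx => hasDerivAt_mu x h (hs x (Set.Ioo_subset_Icc_self hx)) hh)
    refine ⟨c, hs c (Set.Ioo_subset_Icc_self hc), ?_, ?_⟩
    · rw [abs_of_neg (by linarith [hc.2]), abs_of_neg (by linarith)]
      linarith [hc.1]
    · have : a - b ≠ 0 := by linarith
      rw [he]
      field_simp
      ring

lemma diff_asymp (lam : ℝ) (h0 : 0 < lam) (h1 : lam < 1) (h d : ℕ → ℝ)
    (hh : Tendsto h atTop atTop) (hd : Tendsto d atTop (𝓝 0))
    (hhd : Tendsto (fun m => h m ^ 2 * d m) atTop (𝓝 0)) :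
    ∃ R : ℕ → ℝ, Tendsto R atTop (𝓝 (1 / (2 * Real.pi * Real.sqrt (1 - lam ^ 2)))) ∧
      ∀ᶠ m in atTop, mu (lam + d m) (h m) - mu lam (h m) = d m * (R m * Ee lam (h m)) := by
  have hlam : lam ∈ Set.Ioo (-1:ℝ) 1 := ⟨by linarith, h1⟩
  have hld : Tendsto (fun m => lam + d m) atTop (𝓝 lam) := by
    simpa using hd.const_add lam
  have hev : ∀ᶠ m in atTop, ∃ x, x ∈ Set.Ioo (-1:ℝ) 1 ∧ |x - lam| ≤ |d m| ∧
      mu (lam + d m) (h m) - mu lam (h m) = d m * Dd x (h m) := by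
    filter_upwards [hh.eventually_gt_atTop 0, hld.eventually (Ioo_mem_nhds hlam.1 hlam.2)]
      with m hm hm2
    have := mvt_mu hlam hm2 hm
    simpa using this
  have hev2 : ∀ m, ∃ x, (∃ x, x ∈ Set.Ioo (-1:ℝ) 1 ∧ |x - lam| ≤ |d m| ∧
      mu (lam + d m) (h m) - mu lam (h m) = d m * Dd x (h m)) → (x ∈ Set.Ioo (-1:ℝ) 1 ∧
      |x - lam| ≤ |d m| ∧ mu (lam + d m) (h m) - mu lam (h m) = d m * Dd x (h m)) := by
    intro m
    by_cases hx : ∃ x, x ∈ Set.Ioo (-1:ℝ) 1 ∧ |x - lam| ≤ |d m| ∧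
      mu (lam + d m) (h m) - mu lam (h m) = d m * Dd x (h m)
    · obtain ⟨x, hx'⟩ := hx
      exact ⟨x, fun _ => hx'⟩
    · exact ⟨0, fun h => absurd h hx⟩
  choose x hx using hev2
  have hX := hev.mono fun m hm => hx m hm
  have hxd : Tendsto (fun m => x m - lam) atTop (𝓝 0) := by
    refine squeeze_zero_norm' (hX.mono fun m hm => hm.2.1) ?_
    simpa using hd.abs
  have hxl : Tendsto x atTop (𝓝 lam) := by
    simpa using hxd.add_const lam
  have hhx : Tendsto (fun m => h m ^ 2 * (x m - lam)) atTop (𝓝 0) := by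
    refine squeeze_zero_norm' (a := fun m => |h m ^ 2 * d m|) (hX.mono fun m hm => ?_) ?_
    · rw [Real.norm_eq_abs, abs_mul, abs_mul]
      exact mul_le_mul_of_nonneg_left hm.2.1 (abs_nonneg _)
    · simpa using hhd.abs
  refine ⟨fun m => Dd (x m) (h m) / Ee lam (h m), ?_, ?_⟩
  · have hlim : Tendsto (fun m => 1 / (2 * Real.pi * Real.sqrt (1 - x m ^ 2)) *
        Real.exp (h m ^ 2 * (x m - lam) * (1 / ((1 + lam) * (1 + x m))))) atTop
        (𝓝 (1 / (2 * Real.pi * Real.sqrt (1 - lam ^ 2)) *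
        Real.exp (0 * (1 / ((1 + lam) * (1 + lam)))))) := by
      have hw : 0 < Real.sqrt (1 - lam ^ 2) := Real.sqrt_pos.2 (by nlinarith)
      have := Real.pi_pos
      refine Tendsto.mul ?_ ((Real.continuous_exp.tendsto _).comp (hhx.mul ?_))
      · exact tendsto_const_nhds.div (((((hxl.pow 2).const_sub 1)).sqrt).const_mul _) (by positivity)
      · exact tendsto_const_nhds.div ((hxl.const_add 1).const_mul _) (by positivity)
    rw [zero_mul, Real.exp_zero, mul_one] at hlim
    refine hlim.congr' ?_
    filter_upwards [hX] with m hm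
    unfold Dd Ee
    rw [mul_div_assoc, ← Real.exp_sub]
    congr 2
    have e1 : 1 + x m ≠ 0 := by linarith [hm.1.1]
    have e2 : 1 + lam ≠ 0 := by linarith
    field_simp
    ring
  · filter_upwards [hX] with m hm
    rw [hm.2.2]
    have : Ee lam (h m) ≠ 0 := (Real.exp_pos (-(h m) ^ 2 / (1 + lam))).ne'
    rw [div_mul_cancel₀ _ this]

lemma main_tendsto (r : ℝ) (hr : r ∈ Set.Ioo (0 : ℝ) 1)
    (lam : ℝ) (hlam : lam ∈ Set.Ioo (2 * r - 1) 1) (hlam0 : 0 < lam)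
    (eta : ℝ) (s : ℝ) (hs : s * s = 1) :
    Tendsto (fun m : ℕ => s * (Real.sqrt m * (muM r m (lam + s * epsm r lam eta m) - muM r m lam) /
        sigM r m (lam + s * epsm r lam eta m))) atTop (nhds eta) := by
  obtain ⟨hr0, hr1⟩ := hr
  obtain ⟨hl, h1⟩ := hlam
  have hlog : Tendsto (fun m : ℕ => Real.log (m : ℝ)) atTop atTop :=
    Real.tendsto_log_atTop.comp tendsto_natCast_atTop_atTop
  have hh : Tendsto (fun m => hthr r m) atTop atTop :=
    Real.tendsto_sqrt_atTop.comp (hlog.const_mul_atTop (by positivity))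
  have hp : 0 < (lam - (2 * r - 1)) / (2 * (1 + lam)) := by
    apply div_pos <;> linarith
  set p := (lam - (2 * r - 1)) / (2 * (1 + lam)) with hpdef
  set c := Real.sqrt (2 * Real.pi) * (1 + lam) * (1 - lam ^ 2) ^ ((1 : ℝ) / 4) * eta with hc
  have heps : ∀ m, epsm r lam eta m = c / hthr r m * (m : ℝ) ^ (-p) := by
    intro m
    rw [epsm, hthr, neg_div]
  have hhm : Tendsto (fun m : ℕ => hthr r m * (m : ℝ) ^ (-p)) atTop (𝓝 0) := by
    have e1 := ((isLittleO_log_rpow_atTop (r := 2 * p) (by positivity)).tendsto_div_nhds_zero).comp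
      (tendsto_natCast_atTop_atTop (R := ℝ))
    have e2 := (e1.const_mul (2 * r)).sqrt
    rw [mul_zero, Real.sqrt_zero] at e2
    refine e2.congr' ?_
    filter_upwards [eventually_ge_atTop 1] with m hm
    have hm0 : (0:ℝ) < m := by exact_mod_cast hm
    have e3 : (m : ℝ) ^ (-p) = Real.sqrt ((m : ℝ) ^ (2 * p))⁻¹ := by
      rw [eq_comm, Real.sqrt_eq_iff_mul_self_eq (by positivity) (by positivity),
        ← Real.rpow_add hm0, ← Real.rpow_neg hm0.le]
      congr 1
      ring
    have hlog0 : 0 ≤ Real.log m := Real.log_nonneg (by exact_mod_cast hm)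
    rw [hthr, e3, ← Real.sqrt_mul (by positivity)]
    congr 1
    simp only [Function.comp_apply]
    ring
  have hhe : Tendsto (fun m => hthr r m ^ 2 * (s * epsm r lam eta m)) atTop (𝓝 0) := by
    have := hhm.const_mul (s * c)
    rw [mul_zero] at this
    refine this.congr' ?_
    filter_upwards [hh.eventually_gt_atTop 0] with m hm
    rw [heps]
    field_simp
  have hinv : Tendsto (fun m => (hthr r m ^ 2)⁻¹) atTop (𝓝 0) :=
    tendsto_inv_atTop_zero.comp (tendsto_sq.comp hh)
  have hd : Tendsto (fun m => s * epsm r lam eta m) atTop (𝓝 0) := by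
    have := hhe.mul hinv
    rw [mul_zero] at this
    refine this.congr' ?_
    filter_upwards [hh.eventually_gt_atTop 0] with m hm
    field_simp
  obtain ⟨R, hR, hRe⟩ := diff_asymp lam hlam0 h1 (fun m => hthr r m)
    (fun m => s * epsm r lam eta m) hh hd hhe
  have hE : ∀ h, 0 < Ee lam h := fun h => Real.exp_pos _
  have hEle : ∀ h, Ee lam h ≤ 1 := fun h => by
    unfold Ee
    rw [Real.exp_le_one_iff, neg_div]
    have : 0 ≤ h ^ 2 / (1 + lam) := by positivity
    linarith
  have hmu' : Tendsto (fun m => hthr r m ^ 2 * mu (lam + s * epsm r lam eta m) (hthr r m) /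
      Ee lam (hthr r m)) atTop (𝓝 (ff lam)) := by
    have := ((tendsto_mu lam hlam0 h1).comp hh).add (hhe.mul hR)
    rw [zero_mul, add_zero] at this
    refine this.congr' ?_
    filter_upwards [hRe] with m hm
    have e := hE (hthr r m)
    have hm' : mu (lam + s * epsm r lam eta m) (hthr r m) = mu lam (hthr r m) +
      s * epsm r lam eta m * (R m * Ee lam (hthr r m)) := by linarith
    rw [hm']
    simp only [Function.comp_apply]
    field_simp
  have hmu0 : Tendsto (fun m => mu (lam + s * epsm r lam eta m) (hthr r m)) atTop (𝓝 0) := by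
    have e1 : Tendsto (fun m => (hthr r m ^ 2)⁻¹ * Ee lam (hthr r m)) atTop (𝓝 0) := by
      refine squeeze_zero (fun m => ?_) (fun m => ?_) hinv
      · have := hE (hthr r m)
        positivity
      · exact mul_le_of_le_one_right (by positivity) (hEle _)
    have := hmu'.mul e1
    rw [mul_zero] at this
    refine this.congr' ?_
    filter_upwards [hh.eventually_gt_atTop 0] with m hm
    have e := hE (hthr r m)
    field_simp
  have hT : Tendsto (fun m => Real.sqrt (hthr r m ^ 2 * mu (lam + s * epsm r lam eta m) (hthr r m) /
      Ee lam (hthr r m) * (1 - mu (lam + s * epsm r lam eta m) (hthr r m)))) atTop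
      (𝓝 (Real.sqrt (ff lam))) := by
    have := (hmu'.mul (hmu0.const_sub 1)).sqrt
    simpa using this
  set q := (1 - lam ^ 2) ^ ((1 : ℝ) / 4) with hq
  have hq1 : 0 < 1 - lam ^ 2 := by nlinarith
  have hq0 : 0 < q := Real.rpow_pos_of_pos hq1 _
  have hqq : Real.sqrt (1 - lam ^ 2) = q ^ 2 := by
    rw [Real.sqrt_eq_rpow, hq, ← Real.rpow_mul_natCast hq1.le]
    norm_num
  have hP0 : 0 < Real.sqrt (2 * Real.pi) := Real.sqrt_pos.2 (by positivity)
  have hPP : 2 * Real.pi = Real.sqrt (2 * Real.pi) ^ 2 := (Real.sq_sqrt (by positivity)).symm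
  have hff : Real.sqrt (ff lam) = (1 + lam) / (Real.sqrt (2 * Real.pi) * q) := by
    rw [Real.sqrt_eq_iff_mul_self_eq_of_pos (by positivity), ff, hqq]
    nth_rw 3 [hPP]
    field_simp
  have hffpos : 0 < Real.sqrt (ff lam) := by
    rw [hff]
    positivity
  have hfin := (hR.const_mul c).div hT hffpos.ne'
  have hval : c * (1 / (2 * Real.pi * Real.sqrt (1 - lam ^ 2))) / Real.sqrt (ff lam) = eta := by
    rw [hff, hqq, hc]
    nth_rw 2 [hPP]
    field_simp
  rw [hval] at hfin
  refine hfin.congr' ?_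
  filter_upwards [hRe, hh.eventually_gt_atTop 0, eventually_ge_atTop 1] with m hm hpos hm1
  have hm0 : (0:ℝ) < m := by exact_mod_cast hm1
  have hlog0 : 0 ≤ Real.log m := Real.log_nonneg (by exact_mod_cast hm1)
  have hid : Real.sqrt m * epsm r lam eta m * Real.sqrt (Ee lam (hthr r m)) * hthr r m = c := by
    rw [heps]
    have e1 : Real.sqrt (Ee lam (hthr r m)) = (m : ℝ) ^ (-(r / (1 + lam))) := by
      rw [Ee, ← Real.exp_half, Real.rpow_def_of_pos hm0]
      congr 1
      rw [hthr, Real.sq_sqrt (by positivity)]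
      field_simp
    rw [e1, Real.sqrt_eq_rpow]
    have e2 : (m : ℝ) ^ ((1:ℝ) / 2) * (m : ℝ) ^ (-p) * (m : ℝ) ^ (-(r / (1 + lam))) = 1 := by
      rw [← Real.rpow_add hm0, ← Real.rpow_add hm0]
      have : (1:ℝ) / 2 + -p + -(r / (1 + lam)) = 0 := by
        rw [hpdef]
        field_simp
        ring
      rw [this, Real.rpow_zero]
    calc _ = c * ((m : ℝ) ^ ((1:ℝ) / 2) * (m : ℝ) ^ (-p) * (m : ℝ) ^ (-(r / (1 + lam)))) := by
          field_simp
      _ = c := by rw [e2, mul_one]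
  have e0 := hE (hthr r m)
  have hsE : 0 < Real.sqrt (Ee lam (hthr r m)) := Real.sqrt_pos.2 e0
  have hsE2 : Real.sqrt (Ee lam (hthr r m)) ^ 2 = Ee lam (hthr r m) := Real.sq_sqrt e0.le
  have hTm : Real.sqrt (hthr r m ^ 2 * mu (lam + s * epsm r lam eta m) (hthr r m) /
      Ee lam (hthr r m) * (1 - mu (lam + s * epsm r lam eta m) (hthr r m))) =
      hthr r m / Real.sqrt (Ee lam (hthr r m)) * sigM r m (lam + s * epsm r lam eta m) := by
    have : hthr r m ^ 2 * mu (lam + s * epsm r lam eta m) (hthr r m) /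
      Ee lam (hthr r m) * (1 - mu (lam + s * epsm r lam eta m) (hthr r m)) =
      (hthr r m / Real.sqrt (Ee lam (hthr r m))) ^ 2 *
      (mu (lam + s * epsm r lam eta m) (hthr r m) *
        (1 - mu (lam + s * epsm r lam eta m) (hthr r m))) := by
      rw [div_pow, hsE2]
      ring
    rw [this, Real.sqrt_mul (sq_nonneg _), Real.sqrt_sq (by positivity)]
    rfl
  simp only [Pi.div_apply]
  rw [hTm, muM, muM, hm, ← hid]
  generalize sigM r m (lam + s * epsm r lam eta m) = S
  generalize epsm r lam eta m = ep
  set y := Real.sqrt (Ee lam (hthr r m))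
  rw [← hsE2]
  have : s * (Real.sqrt m * (s * ep * (R m * y ^ 2)) / S) =
      (s * s) * (Real.sqrt m * (ep * (R m * y ^ 2)) / S) := by ring
  rw [this, hs, one_mul]
  by_cases hS : S = 0
  · simp [hS]
  · field_simp

/-- asymptotic characterization of the parameters `η⁻_m, η⁺_m`. -/
theorem stmt9 (r : ℝ) (hr : r ∈ Set.Ioo (0 : ℝ) 1)
    (lam : ℝ) (hlam : lam ∈ Set.Ioo (2 * r - 1) 1) (hlam0 : 0 < lam)
    (eta : ℝ) (heta : 0 < eta) :
    Asymptotics.IsEquivalent atTop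
      (fun m : ℕ => Real.sqrt m * (muM r m lam - muM r m (lam - epsm r lam eta m)) /
        sigM r m (lam - epsm r lam eta m))
      (fun _ : ℕ => eta) ∧
    Asymptotics.IsEquivalent atTop
      (fun m : ℕ => -(Real.sqrt m * (muM r m lam - muM r m (lam + epsm r lam eta m)) /
        sigM r m (lam + epsm r lam eta m)))
      (fun _ : ℕ => eta) ∧
    Tendsto (fun m : ℕ => Real.sqrt m * (muM r m lam - muM r m (lam - epsm r lam eta m)) /
        sigM r m (lam - epsm r lam eta m)) atTop (nhds eta) ∧
    Tendsto (fun m : ℕ => -(Real.sqrt m * (muM r m lam - muM r m (lam + epsm r lam eta m)) /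
        sigM r m (lam + epsm r lam eta m))) atTop (nhds eta) := by
  have hp := main_tendsto r hr lam hlam hlam0 eta 1 (by norm_num)
  have hm := main_tendsto r hr lam hlam hlam0 eta (-1) (by norm_num)
  have hA : Tendsto (fun m : ℕ => Real.sqrt m * (muM r m lam - muM r m (lam - epsm r lam eta m)) /
        sigM r m (lam - epsm r lam eta m)) atTop (nhds eta) := by
    refine hm.congr fun m => ?_
    have : lam + -1 * epsm r lam eta m = lam - epsm r lam eta m := by ring
    rw [this]
    ring
  have hB : Tendsto (fun m : ℕ => -(Real.sqrt m * (muM r m lam - muM r m (lam + epsm r lam eta m)) /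
        sigM r m (lam + epsm r lam eta m))) atTop (nhds eta) := by
    refine hp.congr fun m => ?_
    rw [one_mul, one_mul]
    ring
  exact ⟨(Asymptotics.isEquivalent_const_iff_tendsto heta.ne').2 hA,
    (Asymptotics.isEquivalent_const_iff_tendsto heta.ne').2 hB, hA, hB⟩

end
end

section
/- Fix r ∈ (0,1) and λ ∈ (-1, 1). Then m·μ_m(λ) ~ C(λ)·m^{(λ-(2r-1))/(1+λ)}/(2 r log m) as m → ∞, where C(λ) := (1+λ)²/(2π·sqrt(1-λ²)). Consequently, m·μ_m(λ) → ∞ if λ > 2r-1, and m·μ_m(λ) → 0 if λ < 2r-1. -/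
open MeasureTheory ProbabilityTheory Filter Topology

noncomputable section

/-- One-sided exponential weight. -/
def eW (lam s : ℝ) : ℝ := Set.indicator (Set.Ici (0:ℝ)) (fun s => Real.exp (-(1 + lam)⁻¹ * s)) s

/-- Rescaled integrand. -/
def kW (lam h : ℝ) (p : ℝ × ℝ) : ℝ :=
  eW lam p.1 * eW lam p.2 *
    Real.exp (-((p.1 ^ 2 - 2 * lam * p.1 * p.2 + p.2 ^ 2) / (2 * (1 - lam ^ 2)) * (h ^ 2)⁻¹))

lemma eW_nonneg (lam s : ℝ) : 0 ≤ eW lam s :=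
  Set.indicator_nonneg (fun _ _ => (Real.exp_pos _).le) _

lemma eW_measurable (lam : ℝ) : Measurable (eW lam) :=
  Measurable.indicator (by fun_prop) measurableSet_Ici

lemma eW_integrable {lam : ℝ} (hlam : -1 < lam) : Integrable (eW lam) := by
  have h : -(1 + lam)⁻¹ < 0 := neg_lt_zero.mpr (inv_pos.mpr (by linarith))
  have := integrableOn_exp_mul_Ioi h 0
  rw [← integrableOn_Ici_iff_integrableOn_Ioi] at this
  exact (integrable_indicator_iff measurableSet_Ici).mpr this

lemma eW_integral {lam : ℝ} (hlam : -1 < lam) : ∫ s, eW lam s = 1 + lam := by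
  have h : -(1 + lam)⁻¹ < 0 := neg_lt_zero.mpr (inv_pos.mpr (by linarith))
  have h1 : (1 + lam) ≠ 0 := by linarith
  unfold eW
  rw [integral_indicator measurableSet_Ici, integral_Ici_eq_integral_Ioi, integral_exp_mul_Ioi h 0]
  simp

lemma kW_measurable (lam h : ℝ) : Measurable (kW lam h) := by
  unfold kW
  have := eW_measurable lam
  fun_prop

lemma kW_bound {lam : ℝ} (hlam : lam ∈ Set.Ioo (-1 : ℝ) 1) (h : ℝ) (p : ℝ × ℝ) :
    ‖kW lam h p‖ ≤ eW lam p.1 * eW lam p.2 := by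
  obtain ⟨h1, h2⟩ := hlam
  have hs : 0 < 1 - lam ^ 2 := by nlinarith
  have hE : 0 ≤ eW lam p.1 * eW lam p.2 := mul_nonneg (eW_nonneg _ _) (eW_nonneg _ _)
  have hQ : 0 ≤ p.1 ^ 2 - 2 * lam * p.1 * p.2 + p.2 ^ 2 := by
    nlinarith [sq_nonneg (p.1 - lam * p.2), mul_nonneg hs.le (sq_nonneg p.2)]
  unfold kW
  rw [Real.norm_eq_abs, abs_of_nonneg (mul_nonneg hE (Real.exp_pos _).le)]
  apply mul_le_of_le_one_right hE
  rw [Real.exp_le_one_iff]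
  have : 0 ≤ (p.1 ^ 2 - 2 * lam * p.1 * p.2 + p.2 ^ 2) / (2 * (1 - lam ^ 2)) * (h ^ 2)⁻¹ := by
    positivity
  linarith

lemma eW_prod_integrable {lam : ℝ} (hlam : -1 < lam) :
    Integrable (fun p : ℝ × ℝ => eW lam p.1 * eW lam p.2)
      ((volume : Measure ℝ).prod (volume : Measure ℝ)) :=
  (eW_integrable hlam).mul_prod (eW_integrable hlam)

lemma kW_integrable {lam : ℝ} (hlam : lam ∈ Set.Ioo (-1 : ℝ) 1) (h : ℝ) :
    Integrable (kW lam h) ((volume : Measure ℝ).prod (volume : Measure ℝ)) :=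
  (eW_prod_integrable hlam.1).mono' (kW_measurable lam h).aestronglyMeasurable
    (Eventually.of_forall (kW_bound hlam h))

lemma kW_tendsto {lam : ℝ} (hlam : lam ∈ Set.Ioo (-1 : ℝ) 1) :
    Tendsto (fun h : ℝ => ∫ p, kW lam h p ∂((volume : Measure ℝ).prod (volume : Measure ℝ)))
      atTop (𝓝 ((1 + lam) ^ 2)) := by
  have key : ∫ p : ℝ × ℝ, eW lam p.1 * eW lam p.2
      ∂((volume : Measure ℝ).prod (volume : Measure ℝ)) = (1 + lam) ^ 2 := by
    rw [integral_prod_mul, eW_integral hlam.1]; ring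
  rw [← key]
  refine tendsto_integral_filter_of_dominated_convergence
    (fun p : ℝ × ℝ => eW lam p.1 * eW lam p.2) ?_ ?_ (eW_prod_integrable hlam.1) ?_
  · exact Eventually.of_forall fun h => (kW_measurable lam h).aestronglyMeasurable
  · exact Eventually.of_forall fun h => Eventually.of_forall (kW_bound hlam h)
  · refine Eventually.of_forall fun p => ?_
    have h1 : Tendsto (fun h : ℝ => (h ^ 2)⁻¹) atTop (𝓝 0) :=
      tendsto_inv_atTop_zero.comp (tendsto_pow_atTop (by norm_num))
    have h2 := ((Real.continuous_exp.tendsto _).comp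
      ((h1.const_mul ((p.1 ^ 2 - 2 * lam * p.1 * p.2 + p.2 ^ 2) / (2 * (1 - lam ^ 2)))).neg)).const_mul
        (eW lam p.1 * eW lam p.2)
    simpa [kW, Function.comp_def] using h2

lemma affine_subst (g : ℝ → ℝ) {c : ℝ} (hc : 0 < c) (d : ℝ) :
    ∫ y, g y = c * ∫ t, g (c * t + d) := by
  have h1 := Measure.integral_comp_mul_left (fun y => g (y + d)) c
  rw [h1, integral_add_right_eq_self (fun y => g y) d, abs_of_pos (inv_pos.mpr hc), smul_eq_mul,
    ← mul_assoc, mul_inv_cancel₀ hc.ne', one_mul]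

lemma mu_eq_s13 {lam : ℝ} (hlam : lam ∈ Set.Ioo (-1 : ℝ) 1) {h : ℝ} (hh : 0 < h) :
    mu lam h = Real.exp (-(h ^ 2 / (1 + lam))) / (2 * Real.pi * Real.sqrt (1 - lam ^ 2) * h ^ 2) *
      ∫ p, kW lam h p ∂((volume : Measure ℝ).prod (volume : Measure ℝ)) := by
  obtain ⟨h1, h2⟩ := id hlam
  have hs : 0 < 1 - lam ^ 2 := by nlinarith
  have hl : 0 < 1 + lam := by linarith
  set σ := Real.sqrt (1 - lam ^ 2) with hσ
  have hσ0 : 0 < σ := Real.sqrt_pos.mpr hs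
  have hσ2 : σ ^ 2 = 1 - lam ^ 2 := Real.sq_sqrt hs.le
  set S : Set (ℝ × ℝ) := {z | h ≤ z.1 ∧ h ≤ lam * z.1 + σ * z.2} with hS
  have hSm : MeasurableSet S := by
    have a1 : MeasurableSet {z : ℝ × ℝ | h ≤ z.1} :=
      measurableSet_le measurable_const measurable_fst
    have a2 : MeasurableSet {z : ℝ × ℝ | h ≤ lam * z.1 + σ * z.2} :=
      measurableSet_le measurable_const (by fun_prop)
    exact a1.inter a2
  have e1 : mu lam h = ∫ z, S.indicator (fun _ => (1:ℝ)) z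
      ∂((gaussianReal 0 1).prod (gaussianReal 0 1)) := by
    rw [integral_indicator_const _ hSm, smul_eq_mul, mul_one, mu, gaussPair, Measure.map_apply]
    · rfl
    · fun_prop
    · have a1 : MeasurableSet {z : ℝ × ℝ | h ≤ z.1} :=
        measurableSet_le measurable_const measurable_fst
      have a2 : MeasurableSet {z : ℝ × ℝ | h ≤ z.2} :=
        measurableSet_le measurable_const measurable_snd
      exact a1.inter a2
  rw [e1, integral_prod _ ((integrable_const (1:ℝ)).indicator hSm),
    integral_gaussianReal_eq_integral_smul one_ne_zero]
  simp_rw [integral_gaussianReal_eq_integral_smul (one_ne_zero (α := NNReal)), smul_eq_mul]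
  rw [affine_subst _ (inv_pos.mpr hh) h, integral_prod _ (kW_integrable hlam h)]
  have e2 : ∀ s : ℝ, (gaussianPDFReal 0 1 (h⁻¹ * s + h) *
      ∫ y, gaussianPDFReal 0 1 y * S.indicator (fun _ => (1:ℝ)) (h⁻¹ * s + h, y)) =
      (Real.exp (-(h ^ 2 / (1 + lam))) / (2 * Real.pi * σ * h)) * ∫ t, kW lam h (s, t) := by
    intro s
    rw [affine_subst _ (inv_pos.mpr (mul_pos hh hσ0)) ((h - lam * (h⁻¹ * s + h)) / σ),
      ← mul_assoc, ← integral_const_mul, ← integral_const_mul]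
    congr 1
    ext t
    have hmem : ((h⁻¹ * s + h, (h * σ)⁻¹ * t + (h - lam * (h⁻¹ * s + h)) / σ) ∈ S) ↔
        (0 ≤ s ∧ 0 ≤ t) := by
      simp only [hS, Set.mem_ofPred_eq]
      have a1 : h ≤ h⁻¹ * s + h ↔ 0 ≤ s := by
        rw [le_add_iff_nonneg_left, mul_nonneg_iff_of_pos_left (inv_pos.mpr hh)]
      have a2 : lam * (h⁻¹ * s + h) + σ * ((h * σ)⁻¹ * t + (h - lam * (h⁻¹ * s + h)) / σ)
          = h⁻¹ * t + h := by field_simp; ring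
      rw [a1, a2, le_add_iff_nonneg_left, mul_nonneg_iff_of_pos_left (inv_pos.mpr hh)]
    by_cases hst : 0 ≤ s ∧ 0 ≤ t
    · rw [Set.indicator_of_mem (hmem.mpr hst)]
      simp only [kW, eW]
      rw [Set.indicator_of_mem (Set.mem_Ici.mpr hst.1), Set.indicator_of_mem (Set.mem_Ici.mpr hst.2)]
      simp only [gaussianPDFReal, NNReal.coe_one, mul_one, sub_zero]
      have hpi : (Real.sqrt (2 * Real.pi))⁻¹ * (Real.sqrt (2 * Real.pi))⁻¹ = (2 * Real.pi)⁻¹ := by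
        rw [← mul_inv, Real.mul_self_sqrt (by positivity)]
      have hexp : Real.exp (-(h⁻¹ * s + h) ^ 2 / 2) *
          Real.exp (-((h * σ)⁻¹ * t + (h - lam * (h⁻¹ * s + h)) / σ) ^ 2 / 2) =
          Real.exp (-(h ^ 2 / (1 + lam))) * (Real.exp (-(1 + lam)⁻¹ * s) *
            Real.exp (-(1 + lam)⁻¹ * t) *
            Real.exp (-((s ^ 2 - 2 * lam * s * t + t ^ 2) / (2 * (1 - lam ^ 2)) * (h ^ 2)⁻¹))) := by
        rw [← Real.exp_add, ← Real.exp_add, ← Real.exp_add, ← Real.exp_add]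
        congr 1
        have b1 : ((h * σ)⁻¹ * t + (h - lam * (h⁻¹ * s + h)) / σ) ^ 2 =
            (h⁻¹ * t + (h - lam * (h⁻¹ * s + h))) ^ 2 / (1 - lam ^ 2) := by
          rw [← hσ2]; field_simp
        have b2 : 1 - lam ^ 2 = (1 + lam) * (1 - lam) := by ring
        have b3 : 1 - lam ≠ 0 := by linarith
        rw [neg_div, neg_div, b1, b2]
        field_simp
        ring
      calc _ = (h * σ)⁻¹ * ((Real.sqrt (2 * Real.pi))⁻¹ * (Real.sqrt (2 * Real.pi))⁻¹) *
            (Real.exp (-(h⁻¹ * s + h) ^ 2 / 2) *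
          Real.exp (-((h * σ)⁻¹ * t + (h - lam * (h⁻¹ * s + h)) / σ) ^ 2 / 2)) := by ring
        _ = _ := by
          rw [hpi, hexp]
          field_simp
    · rw [Set.indicator_of_notMem (fun hc => hst (hmem.mp hc))]
      have : kW lam h (s, t) = 0 := by
        simp only [kW, eW]
        by_cases hs0 : 0 ≤ s
        · have ht : t ∉ Set.Ici (0:ℝ) := fun hc => hst ⟨hs0, hc⟩
          rw [Set.indicator_of_notMem ht]; ring
        · have ht : s ∉ Set.Ici (0:ℝ) := hs0
          rw [Set.indicator_of_notMem ht]; ring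
      rw [this]; ring
  simp_rw [e2]
  rw [integral_const_mul, ← mul_assoc]
  congr 1
  field_simp

lemma hthr_sq {r : ℝ} (hr : 0 < r) (m : ℕ) : hthr r m ^ 2 = 2 * r * Real.log m :=
  Real.sq_sqrt (mul_nonneg (by positivity) (Real.log_natCast_nonneg m))

lemma log_nat_tendsto : Tendsto (fun m : ℕ => Real.log (m : ℝ)) atTop atTop :=
  Real.tendsto_log_atTop.comp tendsto_natCast_atTop_atTop

lemma hthr_tendsto {r : ℝ} (hr : 0 < r) : Tendsto (hthr r) atTop atTop :=
  Real.tendsto_sqrt_atTop.comp (log_nat_tendsto.const_mul_atTop (by positivity))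

lemma main_equiv (r : ℝ) (hr : r ∈ Set.Ioo (0 : ℝ) 1)
    (lam : ℝ) (hlam : lam ∈ Set.Ioo (-1 : ℝ) 1) :
    Asymptotics.IsEquivalent atTop (fun m : ℕ => (m : ℝ) * muM r m lam)
      (fun m : ℕ => ((1 + lam) ^ 2 / (2 * Real.pi * Real.sqrt (1 - lam ^ 2))) *
        (m : ℝ) ^ ((lam - (2 * r - 1)) / (1 + lam)) / (2 * r * Real.log m)) := by
  obtain ⟨h1, h2⟩ := id hlam
  have hs : 0 < 1 - lam ^ 2 := by nlinarith
  have hl : 0 < 1 + lam := by linarith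
  have hσ0 : 0 < Real.sqrt (1 - lam ^ 2) := Real.sqrt_pos.mpr hs
  apply Asymptotics.isEquivalent_of_tendsto_one
  have hlim : Tendsto (fun m : ℕ => (∫ p, kW lam (hthr r m) p
      ∂((volume : Measure ℝ).prod (volume : Measure ℝ))) / (1 + lam) ^ 2) atTop (𝓝 1) := by
    have := ((kW_tendsto hlam).comp (hthr_tendsto hr.1)).div_const ((1 + lam) ^ 2)
    rwa [div_self (by positivity)] at this
  refine hlim.congr' ?_
  filter_upwards [log_nat_tendsto.eventually_gt_atTop 0, eventually_gt_atTop 0] with m hm hm0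
  have hm0' : (0:ℝ) < m := by exact_mod_cast hm0
  have hr0 := hr.1
  have hh : 0 < hthr r m := Real.sqrt_pos.mpr (by positivity)
  simp only [Pi.div_apply, muM]
  rw [mu_eq_s13 hlam hh, hthr_sq hr.1]
  have hexp : (m:ℝ) ^ ((lam - (2 * r - 1)) / (1 + lam)) =
      m * Real.exp (-(2 * r * Real.log m / (1 + lam))) := by
    nth_rewrite 2 [← Real.exp_log hm0']
    rw [Real.rpow_def_of_pos hm0', ← Real.exp_add]
    congr 1
    field_simp
    ring
  rw [hexp]
  have := Real.exp_pos (-(2 * r * Real.log m / (1 + lam)))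
  field_simp

theorem stmt13 (r : ℝ) (hr : r ∈ Set.Ioo (0 : ℝ) 1)
    (lam : ℝ) (hlam : lam ∈ Set.Ioo (-1 : ℝ) 1) :
    Asymptotics.IsEquivalent atTop (fun m : ℕ => (m : ℝ) * muM r m lam)
      (fun m : ℕ => ((1 + lam) ^ 2 / (2 * Real.pi * Real.sqrt (1 - lam ^ 2))) *
        (m : ℝ) ^ ((lam - (2 * r - 1)) / (1 + lam)) / (2 * r * Real.log m)) ∧
    (2 * r - 1 < lam → Tendsto (fun m : ℕ => (m : ℝ) * muM r m lam) atTop atTop) ∧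
    (lam < 2 * r - 1 → Tendsto (fun m : ℕ => (m : ℝ) * muM r m lam) atTop (nhds 0)) := by
  have hE := main_equiv r hr lam hlam
  obtain ⟨h1, h2⟩ := id hlam
  have hr0 := hr.1
  have hs : 0 < 1 - lam ^ 2 := by nlinarith
  have hl : 0 < 1 + lam := by linarith
  have hσ0 : 0 < Real.sqrt (1 - lam ^ 2) := Real.sqrt_pos.mpr hs
  refine ⟨hE, fun h => ?_, fun h => ?_⟩
  · refine hE.symm.tendsto_atTop ?_
    have hp : 0 < (lam - (2 * r - 1)) / (1 + lam) := div_pos (by linarith) hl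
    have hC : 0 < (1 + lam) ^ 2 / (2 * Real.pi * Real.sqrt (1 - lam ^ 2)) / (2 * r) := by positivity
    have t1 := ((tendsto_exp_mul_div_rpow_atTop 1 _ hp).comp log_nat_tendsto).const_mul_atTop hC
    refine t1.congr' ?_
    filter_upwards [log_nat_tendsto.eventually_gt_atTop 0, eventually_gt_atTop 0] with m hm hm0
    have hm0' : (0:ℝ) < m := by exact_mod_cast hm0
    simp only [Function.comp_apply, Real.rpow_one]
    rw [Real.rpow_def_of_pos hm0', mul_comm (Real.log _)]
    field_simp
  · refine hE.symm.tendsto_nhds ?_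
    have hp : 0 < -((lam - (2 * r - 1)) / (1 + lam)) := by
      rw [← neg_div]; exact div_pos (by linarith) hl
    have t1 : Tendsto (fun m : ℕ => (m:ℝ) ^ ((lam - (2 * r - 1)) / (1 + lam))) atTop (𝓝 0) := by
      have := (tendsto_rpow_neg_atTop hp).comp (tendsto_natCast_atTop_atTop (R := ℝ))
      simpa [Function.comp_def] using this
    have t2 := log_nat_tendsto.const_mul_atTop (show 0 < 2 * r by positivity)
    exact (t1.const_mul _).div_atTop t2

end
end
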